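/- arXiv:2305.12007 — 8 statements merged into one kernel-verified Lean document; each statement's English description precedes it below -/
import Mathlib

section
/- For all positive integers d and r, the Ramanujan sum c_d(r) equals the von Sterneck function: c_d(r) = (φ(d)/φ(d/g))·μ(d/g), where g = gcd(d,r). In particular c_d(r) is an integer. -/
/-- The Ramanujan sum `c_d(r)`: the sum of the `r`-th powers of all primitive
`d`-th roots of unity. -/
noncomputable def ramanujanSum (d r : ℕ) : ℂ :=
  ∑ m ∈ (Finset.range d).filter (fun m => Nat.gcd m d = 1),
    Complex.exp (2 * Real.pi * Complex.I * ((m : ℂ) * (r : ℂ) / (d : ℂ)))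

lemma sum_nthRoots_aux (n : ℕ) (hn : 0 < n) :
    ∑ x ∈ Polynomial.nthRootsFinset n (1 : ℂ), x = if n = 1 then 1 else 0 := by
  have : NeZero n := ⟨hn.ne'⟩
  have hζ := Complex.isPrimitiveRoot_exp n hn.ne'
  set ζ := Complex.exp (2 * Real.pi * Complex.I / n)
  have h1 : ∑ x ∈ Polynomial.nthRootsFinset n (1 : ℂ), x = ∑ i ∈ Finset.range n, ζ ^ i := by
    symm
    refine Finset.sum_bij (fun i _ => ζ ^ i) ?_ ?_ ?_ ?_
    · intro i _
      rw [Polynomial.mem_nthRootsFinset hn, ← pow_mul, mul_comm, pow_mul, hζ.pow_eq_one, one_pow]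
    · intro i hi j hj h
      exact hζ.pow_inj (Finset.mem_range.1 hi) (Finset.mem_range.1 hj) h
    · intro x hx
      rw [Polynomial.mem_nthRootsFinset hn] at hx
      obtain ⟨i, hi, h⟩ := hζ.eq_pow_of_pow_eq_one hx
      exact ⟨i, Finset.mem_range.2 hi, h⟩
    · intros; rfl
  rw [h1]
  split_ifs with h
  · subst h; simp
  · exact hζ.geom_sum_eq_zero (by omega)

lemma sum_primitiveRoots_aux (n : ℕ) (hn : 0 < n) :
    ∑ x ∈ primitiveRoots n ℂ, x = (ArithmeticFunction.moebius n : ℂ) := by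
  classical
  have key := (ArithmeticFunction.sum_eq_iff_sum_mul_moebius_eq
    (f := fun n => ∑ x ∈ primitiveRoots n ℂ, x) (g := fun n => if n = 1 then (1 : ℂ) else 0)).1 (by
      intro n hn
      rw [← sum_nthRoots_aux n hn, IsPrimitiveRoot.nthRoots_one_eq_biUnion_primitiveRoots,
        Finset.sum_biUnion]
      intro a _ b _ hab
      exact IsPrimitiveRoot.disjoint hab) n hn
  rw [← key, Finset.sum_eq_single (n, 1)]
  · simp
  · rintro ⟨a, b⟩ hab hne
    rw [Nat.mem_divisorsAntidiagonal] at hab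
    have : b ≠ 1 := by
      rintro rfl
      apply hne
      simp at hab
      simp [hab.1]
    simp [this]
  · intro h
    exact absurd (Nat.mem_divisorsAntidiagonal.2 ⟨mul_one n, hn.ne'⟩) h

lemma sum_coprime_pow_aux (n : ℕ) (hn : 0 < n) (ξ : ℂ) (hξ : IsPrimitiveRoot ξ n) :
    ∑ m ∈ (Finset.range n).filter (fun m => Nat.gcd m n = 1), ξ ^ m =
      (ArithmeticFunction.moebius n : ℂ) := by
  have : NeZero n := ⟨hn.ne'⟩
  rw [← sum_primitiveRoots_aux n hn]
  refine Finset.sum_bij (fun i _ => ξ ^ i) ?_ ?_ ?_ ?_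
  · intro i hi
    rw [mem_primitiveRoots hn]
    exact hξ.pow_of_coprime i (Finset.mem_filter.1 hi).2
  · intro i hi j hj h
    exact hξ.pow_inj (Finset.mem_range.1 (Finset.mem_filter.1 hi).1)
      (Finset.mem_range.1 (Finset.mem_filter.1 hj).1) h
  · intro x hx
    rw [mem_primitiveRoots hn, hξ.isPrimitiveRoot_iff] at hx
    obtain ⟨i, hi, hc, h⟩ := hx
    exact ⟨i, Finset.mem_filter.2 ⟨Finset.mem_range.2 hi, hc⟩, h⟩
  · intros; rfl

lemma sum_coprime_units_aux (n : ℕ) [NeZero n] (f : ℕ → ℂ) :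
    ∑ m ∈ (Finset.range n).filter (fun m => Nat.gcd m n = 1), f m =
      ∑ u : (ZMod n)ˣ, f (u : ZMod n).val := by
  symm
  refine Finset.sum_bij (fun u _ => (u : ZMod n).val) ?_ ?_ ?_ ?_
  · intro u _
    exact Finset.mem_filter.2 ⟨Finset.mem_range.2 (ZMod.val_lt _), ZMod.val_coe_unit_coprime u⟩
  · intro u _ v _ h
    exact Units.ext (ZMod.val_injective n h)
  · intro m hm
    obtain ⟨h1, h2⟩ := Finset.mem_filter.1 hm
    refine ⟨ZMod.unitOfCoprime m h2, Finset.mem_univ _, ?_⟩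
    rw [ZMod.coe_unitOfCoprime, ZMod.val_natCast, Nat.mod_eq_of_lt (Finset.mem_range.1 h1)]
  · intros; rfl

lemma sum_fiber_aux (n d : ℕ) [NeZero n] [NeZero d] (h : n ∣ d) :
    ∃ k : ℕ, ∀ f : (ZMod n)ˣ → ℂ,
      ∑ u : (ZMod d)ˣ, f (ZMod.unitsMap h u) = k * ∑ v : (ZMod n)ˣ, f v := by
  classical
  refine ⟨(Finset.univ.filter (fun u : (ZMod d)ˣ => ZMod.unitsMap h u = 1)).card, fun f => ?_⟩
  rw [Finset.sum_comp f (ZMod.unitsMap h),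
    Finset.image_univ_of_surjective (ZMod.unitsMap_surjective h), Finset.mul_sum]
  refine Finset.sum_congr rfl fun v _ => ?_
  rw [nsmul_eq_mul, MonoidHom.card_fiber_eq_of_mem_range (ZMod.unitsMap h)
    (ZMod.unitsMap_surjective h v) (ZMod.unitsMap_surjective h 1)]

theorem stmt_0 (d r : ℕ) (hd : 0 < d) (hr : 0 < r) :
    ramanujanSum d r =
      ((Nat.totient d : ℂ) / (Nat.totient (d / Nat.gcd d r) : ℂ)) *
        (ArithmeticFunction.moebius (d / Nat.gcd d r) : ℂ) ∧
    ∃ z : ℤ, ramanujanSum d r = (z : ℂ) := by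
  have hg : 0 < Nat.gcd d r := Nat.gcd_pos_of_pos_left r hd
  have hdn : d = Nat.gcd d r * (d / Nat.gcd d r) := (Nat.mul_div_cancel' (Nat.gcd_dvd_left d r)).symm
  have hrn : r = Nat.gcd d r * (r / Nat.gcd d r) := (Nat.mul_div_cancel' (Nat.gcd_dvd_right d r)).symm
  have hcop : (r / Nat.gcd d r).Coprime (d / Nat.gcd d r) :=
    (Nat.coprime_div_gcd_div_gcd hg).symm
  have hn : 0 < d / Nat.gcd d r := Nat.div_pos (Nat.gcd_le_left r hd) hg
  have hdvd : d / Nat.gcd d r ∣ d := Nat.div_dvd_of_dvd (Nat.gcd_dvd_left d r)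
  have hζ := Complex.isPrimitiveRoot_exp d hd.ne'
  have hξ : IsPrimitiveRoot (Complex.exp (2 * Real.pi * Complex.I / d) ^ r) (d / Nat.gcd d r) := by
    have := (hζ.pow hd hdn).pow_of_coprime _ hcop
    rwa [← pow_mul, ← hrn] at this
  have hsum : ramanujanSum d r = ∑ m ∈ (Finset.range d).filter (fun m => Nat.gcd m d = 1),
      (Complex.exp (2 * Real.pi * Complex.I / d) ^ r) ^ m := by
    unfold ramanujanSum
    refine Finset.sum_congr rfl fun m _ => ?_
    rw [← pow_mul, ← Complex.exp_nat_mul]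
    congr 1
    push_cast
    ring
  generalize d / Nat.gcd d r = n at *
  generalize Complex.exp (2 * Real.pi * Complex.I / d) ^ r = ξ at *
  have : NeZero n := ⟨hn.ne'⟩
  have : NeZero d := ⟨hd.ne'⟩
  obtain ⟨k, hk⟩ := sum_fiber_aux n d hdvd
  have hcard : (Nat.totient d : ℂ) = k * (Nat.totient n : ℂ) := by
    have := hk (fun _ => 1)
    simpa [ZMod.card_units_eq_totient] using this
  have hval : ramanujanSum d r = k * (ArithmeticFunction.moebius n : ℂ) := by
    rw [hsum, ← sum_coprime_pow_aux n hn ξ hξ, sum_coprime_units_aux d, sum_coprime_units_aux n,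
      ← hk (fun v => ξ ^ (v : ZMod n).val)]
    refine Finset.sum_congr rfl fun u _ => ?_
    rw [ZMod.unitsMap_val, ZMod.cast_eq_val, ZMod.val_natCast]
    exact pow_eq_pow_mod _ hξ.pow_eq_one
  have hne : (Nat.totient n : ℂ) ≠ 0 := by
    exact_mod_cast (Nat.totient_pos.2 hn).ne'
  refine ⟨?_, k * ArithmeticFunction.moebius n, ?_⟩
  · rw [hval, hcard, mul_div_cancel_right₀ _ hne]
  · rw [hval]; push_cast; rfl
end

section
/- Fix n ≥ 1. The diagonal Ramanujan sum c_d(n/d) takes only values in {0, 1, -1} for every divisor d of n if and only if n is squarefree or n = 4m for some odd squarefree integer m. -/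
lemma ram_eq_prim (d r : ℕ) (hd : 0 < d) :
    ramanujanSum d r = ∑ z ∈ primitiveRoots d ℂ, z ^ r := by
  unfold ramanujanSum
  have hprim := Complex.isPrimitiveRoot_exp d hd.ne'
  have hpow : ∀ m : ℕ, Complex.exp (2 * Real.pi * Complex.I * ((m : ℂ) / (d : ℂ))) =
      Complex.exp (2 * Real.pi * Complex.I / (d : ℂ)) ^ m := by
    intro m
    rw [← Complex.exp_nat_mul]
    congr 1
    ring
  refine Finset.sum_bij
    (fun m _ => Complex.exp (2 * Real.pi * Complex.I * ((m : ℂ) / (d : ℂ)))) ?_ ?_ ?_ ?_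
  · intro m hm
    rw [Finset.mem_filter] at hm
    rw [mem_primitiveRoots hd]
    exact Complex.isPrimitiveRoot_exp_of_coprime m d hd.ne' hm.2
  · intro a ha b hb hab
    rw [Finset.mem_filter, Finset.mem_range] at ha hb
    simp only [hpow] at hab
    exact hprim.pow_inj ha.1 hb.1 hab
  · intro z hz
    rw [mem_primitiveRoots hd, Complex.isPrimitiveRoot_iff z d hd.ne'] at hz
    obtain ⟨i, hi, hc, h⟩ := hz
    exact ⟨i, by simpa using ⟨hi, hc⟩, h⟩
  · intro m _
    rw [← Complex.exp_nat_mul]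
    congr 1
    ring

lemma sum_nthRoots (n r : ℕ) (hn : 0 < n) :
    ∑ z ∈ Polynomial.nthRootsFinset n (1 : ℂ), z ^ r = if n ∣ r then (n : ℂ) else 0 := by
  have hprim := Complex.isPrimitiveRoot_exp n hn.ne'
  have : NeZero n := ⟨hn.ne'⟩
  split_ifs with h
  · rw [Finset.sum_congr rfl (g := fun _ => (1 : ℂ))]
    · simp [hprim.card_nthRootsFinset]
    · intro z hz
      rw [Polynomial.mem_nthRootsFinset hn] at hz
      obtain ⟨k, rfl⟩ := h
      rw [pow_mul, hz, one_pow]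
  · set w := Complex.exp (2 * Real.pi * Complex.I / (n : ℂ)) with hw
    have hne : w ^ r ≠ 1 := fun hh => h ((hprim.pow_eq_one_iff_dvd r).1 hh)
    have key : w ^ r * ∑ z ∈ Polynomial.nthRootsFinset n (1 : ℂ), z ^ r =
        ∑ z ∈ Polynomial.nthRootsFinset n (1 : ℂ), z ^ r := by
      rw [Finset.mul_sum]
      refine Finset.sum_bij (fun z _ => w * z) ?_ ?_ ?_ ?_
      · intro z hz
        rw [Polynomial.mem_nthRootsFinset hn] at hz ⊢
        rw [mul_pow, hz, hprim.pow_eq_one, one_mul]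
      · intro a _ b _ hab
        exact mul_left_cancel₀ (Complex.exp_ne_zero _) hab
      · intro z hz
        rw [Polynomial.mem_nthRootsFinset hn] at hz
        refine ⟨w⁻¹ * z, ?_, ?_⟩
        · rw [Polynomial.mem_nthRootsFinset hn, mul_pow, hz, inv_pow, hprim.pow_eq_one]
          simp
        · exact mul_inv_cancel_left₀ (Complex.exp_ne_zero _) z
      · intro z _
        rw [mul_pow]
    have h2 : (w ^ r - 1) * ∑ z ∈ Polynomial.nthRootsFinset n (1 : ℂ), z ^ r = 0 := by
      rw [sub_mul, key]; ring
    exact (mul_eq_zero.1 h2).resolve_left (sub_ne_zero.2 hne)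

lemma ram_formula (d r : ℕ) (hd : 0 < d) :
    ramanujanSum d r = ((∑ b ∈ d.divisors.filter (fun b => b ∣ r),
      ArithmeticFunction.moebius (d / b) * (b : ℤ) : ℤ) : ℂ) := by
  classical
  have h1 : ∀ n > 0, ∑ i ∈ n.divisors, ramanujanSum i r =
      (fun n : ℕ => if n ∣ r then (n : ℂ) else 0) n := by
    intro n hn
    simp only
    rw [← sum_nthRoots n r hn, IsPrimitiveRoot.nthRoots_one_eq_biUnion_primitiveRoots,
      Finset.sum_biUnion]
    · refine Finset.sum_congr rfl fun i hi => ram_eq_prim i r (Nat.pos_of_mem_divisors hi)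
    · intro i _ j _ hij
      exact IsPrimitiveRoot.disjoint hij
  have h2 := (ArithmeticFunction.sum_eq_iff_sum_mul_moebius_eq.1 h1) d hd
  rw [← h2, Nat.sum_divisorsAntidiagonal' (fun a b =>
    ((ArithmeticFunction.moebius a : ℤ) : ℂ) * (if b ∣ r then (b : ℂ) else 0)),
    Finset.sum_filter]
  push_cast
  refine Finset.sum_congr rfl fun b _ => ?_
  split_ifs <;> simp

lemma moebius_val (d : ℕ) : ArithmeticFunction.moebius d = 0 ∨ ArithmeticFunction.moebius d = 1 ∨
    ArithmeticFunction.moebius d = -1 :=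
  ArithmeticFunction.moebius_eq_or d

lemma two_of_sq_dvd {m b : ℕ} (ho : Odd m) (hs : Squarefree m) (h : b * b ∣ 4 * m) :
    b = 1 ∨ b = 2 := by
  have hc : ∀ c : ℕ, Odd c → c * c ∣ 4 * m → c = 1 := by
    intro c hc h
    have : Nat.Coprime (c * c) 4 := by
      have : Nat.Coprime c 2 := Nat.coprime_two_right.2 hc
      have h4 : Nat.Coprime c (2 * 2) := Nat.Coprime.mul_right this this
      exact Nat.Coprime.mul_left h4 h4
    exact Nat.isUnit_iff.1 (hs c (this.dvd_of_dvd_mul_left h))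
  rcases Nat.even_or_odd b with he | hb
  · obtain ⟨c, rfl⟩ := he
    have h' : c * c ∣ m := by
      have : 4 * (c * c) ∣ 4 * m := by convert h using 1; ring
      exact Nat.dvd_of_mul_dvd_mul_left (by norm_num) this
    have := Nat.isUnit_iff.1 (hs c h')
    omega
  · exact Or.inl (hc b hb h)

theorem stmt_3 (n : ℕ) (hn : 1 ≤ n) :
    (∀ d : ℕ, d ∣ n → ramanujanSum d (n / d) = 0 ∨ ramanujanSum d (n / d) = 1 ∨
      ramanujanSum d (n / d) = -1) ↔
    (Squarefree n ∨ ∃ m : ℕ, Odd m ∧ Squarefree m ∧ n = 4 * m) := by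
  constructor
  · intro h
    -- no odd prime squared divides n
    have hp : ∀ p : ℕ, p.Prime → p * p ∣ n → p = 2 := by
      intro p pp ⟨k, hk⟩
      have hnp : n / p = p * k := by
        rw [hk, mul_assoc, Nat.mul_div_cancel_left _ pp.pos]
      have := h p ⟨p * k, by rw [hk, mul_assoc]⟩
      rw [hnp, ram_formula p _ pp.pos] at this
      have hf : p.divisors.filter (fun b => b ∣ p * k) = {1, p} := by
        rw [Finset.filter_true_of_mem, pp.divisors]
        intro b hb
        exact (Nat.dvd_of_mem_divisors hb).mul_right k
      rw [hf, Finset.sum_pair pp.one_lt.ne, Nat.div_one, Nat.div_self pp.pos,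
        ArithmeticFunction.moebius_apply_prime pp, ArithmeticFunction.moebius_apply_one] at this
      norm_cast at this
      have := pp.two_le
      push_cast at *
      omega
    have h8 : ¬ 8 ∣ n := by
      rintro ⟨k, hk⟩
      have hn4 : n / 4 = 2 * k := by omega
      have := h 4 ⟨2 * k, by omega⟩
      rw [hn4, ram_formula 4 _ (by norm_num)] at this
      have hd : Nat.divisors 4 = {1, 2, 4} := by decide
      have m4 : ArithmeticFunction.moebius 4 = 0 :=
        ArithmeticFunction.moebius_eq_zero_of_not_squarefree (by decide)
      have m2 : ArithmeticFunction.moebius 2 = -1 :=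
        ArithmeticFunction.moebius_apply_prime Nat.prime_two
      rw [hd, Finset.sum_filter] at this
      by_cases h4 : 4 ∣ 2 * k
      · simp [h4, m4, m2] at this
        norm_num at this
      · simp [h4, m4, m2] at this
        norm_num [Complex.ext_iff] at this
    by_cases h4 : 4 ∣ n
    · right
      obtain ⟨m, hm⟩ := h4
      have hodd : Odd m := by
        rw [Nat.odd_iff]; omega
      refine ⟨m, hodd, ?_, hm⟩
      rw [Nat.squarefree_iff_prime_squarefree]
      intro p pp hpm
      have := hp p pp (hm ▸ hpm.mul_left 4)
      subst this
      rw [Nat.odd_iff] at hodd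
      omega
    · left
      rw [Nat.squarefree_iff_prime_squarefree]
      intro p pp hpm
      have := hp p pp hpm
      subst this
      exact h4 hpm
  · intro h d hd
    have dpos : 0 < d := Nat.pos_of_dvd_of_pos hd hn
    rw [ram_formula d _ dpos]
    have hsq : ∀ b ∈ d.divisors.filter (fun b => b ∣ n / d), b * b ∣ n := by
      intro b hb
      rw [Finset.mem_filter] at hb
      have := Nat.mul_dvd_mul (Nat.dvd_of_mem_divisors hb.1) hb.2
      rwa [Nat.mul_div_cancel' hd] at this
    have key : (∑ b ∈ d.divisors.filter (fun b => b ∣ n / d),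
        ArithmeticFunction.moebius (d / b) * (b : ℤ)) = ArithmeticFunction.moebius d ∨
        ∃ e, (∑ b ∈ d.divisors.filter (fun b => b ∣ n / d),
        ArithmeticFunction.moebius (d / b) * (b : ℤ)) = ArithmeticFunction.moebius e := by
      have one : (∀ b ∈ d.divisors.filter (fun b => b ∣ n / d), b = 1) →
          d.divisors.filter (fun b => b ∣ n / d) = {1} := by
        intro hh
        refine Finset.eq_singleton_iff_unique_mem.2 ⟨?_, hh⟩
        simp [dpos.ne']
      rcases h with h | ⟨m, ho, hs, hm⟩
      · left
        rw [one fun b hb => Nat.isUnit_iff.1 (h b (hsq b hb))]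
        simp
      · by_cases h2 : 2 ∣ d ∧ 2 ∣ n / d
        · right
          obtain ⟨⟨e, he⟩, ⟨k, hk⟩⟩ := h2
          have hnd : d * (n / d) = n := Nat.mul_div_cancel' hd
          have hem : e * k = m := by
            rw [hk, he, hm] at hnd
            nlinarith
          have hoe : Odd e := by
            rw [← hem] at ho
            exact (Nat.odd_mul.1 ho).1
          have hf : d.divisors.filter (fun b => b ∣ n / d) = {1, 2} := by
            ext b
            constructor
            · intro hb
              have := two_of_sq_dvd ho hs (hm ▸ hsq b hb)
              simpa using this
            · intro hb
              simp only [Finset.mem_insert, Finset.mem_singleton] at hb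
              rw [Finset.mem_filter, Nat.mem_divisors]
              rcases hb with rfl | rfl
              · simp [dpos.ne']
              · exact ⟨⟨⟨e, he⟩, dpos.ne'⟩, ⟨k, hk⟩⟩
          refine ⟨e, ?_⟩
          have hde : d / 2 = e := by omega
          rw [hf, Finset.sum_pair (by norm_num), Nat.div_one, hde, he,
            ArithmeticFunction.isMultiplicative_moebius.map_mul_of_coprime
              (Nat.coprime_two_left.2 hoe),
            ArithmeticFunction.moebius_apply_prime Nat.prime_two]
          push_cast
          ring
        · left
          rw [one]
          · simp
          · intro b hb
            rcases two_of_sq_dvd ho hs (hm ▸ hsq b hb) with h1 | h1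
            · exact h1
            · subst h1
              rw [Finset.mem_filter] at hb
              exact absurd ⟨Nat.dvd_of_mem_divisors hb.1, hb.2⟩ h2
    have : ∃ e, (∑ b ∈ d.divisors.filter (fun b => b ∣ n / d),
        ArithmeticFunction.moebius (d / b) * (b : ℤ)) = ArithmeticFunction.moebius e := by
      rcases key with h | h
      · exact ⟨d, h⟩
      · exact h
    obtain ⟨e, he⟩ := this
    rw [he]
    rcases moebius_val e with h | h | h <;> simp [h]
end

section
/- Let n ≥ 1 and let d be a divisor of n. Then ∑_{k|n} c_d(n/k)·μ(k) equals n if d = n, and equals 0 otherwise. -/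
theorem expSum_aux (D r : ℕ) (hD : 0 < D) :
    ∑ j ∈ Finset.range D, Complex.exp (2 * Real.pi * Complex.I * ((j : ℂ) * (r : ℂ) / (D : ℂ)))
      = if D ∣ r then (D : ℂ) else 0 := by
  have hDC : (D : ℂ) ≠ 0 := by exact_mod_cast hD.ne'
  have h0 := Complex.isPrimitiveRoot_exp D hD.ne'
  have h1 : ∀ j : ℕ, Complex.exp (2 * Real.pi * Complex.I * ((j : ℂ) * (r : ℂ) / (D : ℂ)))
      = (Complex.exp (2 * Real.pi * Complex.I / D) ^ r) ^ j := by
    intro j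
    rw [← Complex.exp_nat_mul, ← Complex.exp_nat_mul]
    congr 1
    field_simp
  rw [Finset.sum_congr rfl (fun j _ => h1 j)]
  split_ifs with h
  · rw [(h0.pow_eq_one_iff_dvd r).2 h]; simp
  · have hx : Complex.exp (2 * Real.pi * Complex.I / D) ^ r ≠ 1 :=
      fun hh => h ((h0.pow_eq_one_iff_dvd r).1 hh)
    rw [geom_sum_eq hx, ← pow_mul, mul_comm r D, pow_mul, h0.pow_eq_one]
    simp

theorem moebius_ind (g : ℕ) (_hg : 0 < g) :
    ∑ k ∈ g.divisors, (ArithmeticFunction.moebius k : ℂ) = if g = 1 then 1 else 0 := by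
  have h := congrArg (fun f => f g) ArithmeticFunction.coe_zeta_mul_moebius
  simp only [ArithmeticFunction.coe_zeta_mul_apply, ArithmeticFunction.one_apply] at h
  exact_mod_cast congrArg (Int.cast : ℤ → ℂ) h

theorem sum_mult (k e : ℕ) (hk : 0 < k) (f : ℕ → ℂ) :
    ∑ m ∈ (Finset.range (k * e)).filter (fun m => k ∣ m), f m
      = ∑ j ∈ Finset.range e, f (k * j) := by
  symm
  apply Finset.sum_bij (fun j _ => k * j)
  · intro j hj
    simp only [Finset.mem_filter, Finset.mem_range] at hj ⊢
    exact ⟨by gcongr, dvd_mul_right _ _⟩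
  · intro a _ b _ h
    exact Nat.eq_of_mul_eq_mul_left hk h
  · intro b hb
    simp only [Finset.mem_filter, Finset.mem_range] at hb
    obtain ⟨hb, c, rfl⟩ := hb
    exact ⟨c, Finset.mem_range.2 (Nat.lt_of_mul_lt_mul_left hb), rfl⟩
  · intros; rfl

theorem ramanujan_formula (d r : ℕ) (hd : 0 < d) (hr : 0 < r) :
    ramanujanSum d r = ∑ e ∈ r.divisors,
      if e ∣ d then (e : ℂ) * (ArithmeticFunction.moebius (d / e) : ℂ) else 0 := by
  have h1 : ramanujanSum d r = ∑ k ∈ d.divisors, (ArithmeticFunction.moebius k : ℂ) *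
      (if d / k ∣ r then ((d / k : ℕ) : ℂ) else 0) := by
    unfold ramanujanSum
    rw [Finset.sum_filter]
    have : ∀ m ∈ Finset.range d, (if Nat.gcd m d = 1 then
        Complex.exp (2 * Real.pi * Complex.I * ((m : ℂ) * (r : ℂ) / (d : ℂ))) else 0)
        = ∑ k ∈ d.divisors, if k ∣ m then (ArithmeticFunction.moebius k : ℂ) *
          Complex.exp (2 * Real.pi * Complex.I * ((m : ℂ) * (r : ℂ) / (d : ℂ))) else 0 := by
      intro m _
      have hs : d.divisors.filter (fun k => k ∣ m) = (Nat.gcd m d).divisors := by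
        ext k
        have := Nat.gcd_pos_of_pos_right m hd
        simp only [Finset.mem_filter, Nat.mem_divisors, Nat.dvd_gcd_iff]
        constructor
        · rintro ⟨⟨a, b⟩, c⟩; exact ⟨⟨c, a⟩, this.ne'⟩
        · rintro ⟨⟨a, b⟩, c⟩; exact ⟨⟨b, hd.ne'⟩, a⟩
      rw [← Finset.sum_filter, hs, ← Finset.sum_mul,
        moebius_ind _ (Nat.gcd_pos_of_pos_right m hd)]
      split_ifs <;> simp
    rw [Finset.sum_congr rfl this, Finset.sum_comm]
    refine Finset.sum_congr rfl fun k hk => ?_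
    obtain ⟨e, rfl⟩ := Nat.dvd_of_mem_divisors hk
    have hk0 : 0 < k := Nat.pos_of_mul_pos_right hd
    have he0 : 0 < e := Nat.pos_of_mul_pos_left hd
    rw [← Finset.sum_filter, sum_mult k e hk0, ← Finset.mul_sum,
      Nat.mul_div_cancel_left _ hk0, ← expSum_aux e r he0]
    congr 1
    refine Finset.sum_congr rfl fun j _ => ?_
    have : (k : ℂ) ≠ 0 := by exact_mod_cast hk0.ne'
    have : (e : ℂ) ≠ 0 := by exact_mod_cast he0.ne'
    congr 2
    push_cast
    field_simp
  rw [h1, ← Nat.sum_div_divisors d, ← Finset.sum_filter]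
  have h2 : ∀ e ∈ d.divisors, (ArithmeticFunction.moebius (d / e) : ℂ) *
      (if d / (d / e) ∣ r then ((d / (d / e) : ℕ) : ℂ) else 0)
      = if e ∣ r then (e : ℂ) * (ArithmeticFunction.moebius (d / e) : ℂ) else 0 := by
    intro e he
    rw [Nat.div_div_self (Nat.dvd_of_mem_divisors he) hd.ne']
    split_ifs <;> ring
  rw [Finset.sum_congr rfl h2, ← Finset.sum_filter]
  refine Finset.sum_congr ?_ fun _ _ => rfl
  ext e
  simp only [Finset.mem_filter, Nat.mem_divisors]
  constructor
  · rintro ⟨⟨a, b⟩, c⟩; exact ⟨⟨c, hr.ne'⟩, a⟩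
  · rintro ⟨⟨a, b⟩, c⟩; exact ⟨⟨c, hd.ne'⟩, a⟩

theorem stmt_7 (n : ℕ) (hn : 1 ≤ n) (d : ℕ) (hd : d ∣ n) :
    ∑ k ∈ n.divisors, ramanujanSum d (n / k) * (ArithmeticFunction.moebius k : ℂ) =
      if d = n then (n : ℂ) else 0 := by
  have hd0 : 0 < d := Nat.pos_of_dvd_of_pos hd hn
  have h := (ArithmeticFunction.sum_eq_iff_sum_mul_moebius_eq
    (f := fun e => if e ∣ d then (e : ℂ) * (ArithmeticFunction.moebius (d / e) : ℂ) else 0)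
    (g := fun r => ramanujanSum d r)).1
      (fun r hr => (ramanujan_formula d r hd0 hr).symm) n hn
  rw [Nat.sum_divisorsAntidiagonal (fun x y => (ArithmeticFunction.moebius x : ℂ) * ramanujanSum d y)] at h
  rw [Finset.sum_congr rfl (fun k _ => mul_comm _ _), h]
  by_cases hdn : d = n
  · subst hdn
    simp [Nat.div_self hd0]
  · have : ¬ n ∣ d := fun hh => hdn (Nat.dvd_antisymm hd hh)
    simp [hdn, this]
end

section
/- Let n ≥ 2 be a positive integer and let d be a divisor of n. For each prime p dividing n, let α_p be the exponent of p in n and β_p the exponent of p in d (so 0 ≤ β_p ≤ α_p and α_p ≥ 1). Then ∑_{k|n} c_d(k) = ∏_{p prime, p|n} ((α_p - β_p + 1)·φ(p^{β_p}) - e_p), where e_p = 0 if β_p = 0 and e_p = p^{β_p - 1} if β_p ≥ 1. -/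
open Finset in
lemma rs_eq_primitiveRoots (d r : ℕ) :
    ramanujanSum d r = ∑ z ∈ primitiveRoots d ℂ, z ^ r := by
  rcases Nat.eq_zero_or_pos d with rfl | hd
  · simp [ramanujanSum]
  unfold ramanujanSum
  have hw := Complex.isPrimitiveRoot_exp d hd.ne'
  have key : ∀ m : ℕ, Complex.exp (2 * Real.pi * Complex.I * ((m : ℂ) / (d : ℂ)))
      = Complex.exp (2 * Real.pi * Complex.I / d) ^ m := by
    intro m
    rw [← Complex.exp_nat_mul]
    congr 1
    ring
  refine Finset.sum_bij
    (fun m _ => Complex.exp (2 * Real.pi * Complex.I * ((m : ℂ) / (d : ℂ)))) ?_ ?_ ?_ ?_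
  · intro m hm
    rw [mem_filter] at hm
    rw [mem_primitiveRoots hd]
    exact Complex.isPrimitiveRoot_exp_of_coprime m d hd.ne' hm.2
  · intro a ha b hb hab
    simp only [mem_filter, mem_range] at ha hb
    simp only [key] at hab
    exact hw.pow_inj ha.1 hb.1 hab
  · intro z hz
    rw [mem_primitiveRoots hd, Complex.isPrimitiveRoot_iff z d hd.ne'] at hz
    obtain ⟨i, hi, hc, h⟩ := hz
    exact ⟨i, by simp only [mem_filter, mem_range]; exact ⟨hi, hc⟩, h⟩
  · intro m _
    rw [← Complex.exp_nat_mul]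
    congr 1
    ring

open Finset in
lemma rs_sum_divisors (D r : ℕ) :
    ∑ d ∈ D.divisors, ramanujanSum d r = if D ∣ r then (D : ℂ) else 0 := by
  classical
  rcases Nat.eq_zero_or_pos D with rfl | hD
  · simp
  have hw := Complex.isPrimitiveRoot_exp D hD.ne'
  set w := Complex.exp (2 * Real.pi * Complex.I / D) with hwdef
  have h1 : ∑ d ∈ D.divisors, ramanujanSum d r =
      ∑ z ∈ Polynomial.nthRootsFinset D (1 : ℂ), z ^ r := by
    rw [IsPrimitiveRoot.nthRoots_one_eq_biUnion_primitiveRoots, sum_biUnion]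
    · exact sum_congr rfl fun d _ => rs_eq_primitiveRoots d r
    · intro a _ b _ hab
      exact IsPrimitiveRoot.disjoint hab
  have h2 : ∑ z ∈ Polynomial.nthRootsFinset D (1 : ℂ), z ^ r =
      ∑ i ∈ range D, (w ^ r) ^ i := by
    symm
    refine Finset.sum_bij (fun i _ => w ^ i) ?_ ?_ ?_ ?_
    · intro i _
      rw [Polynomial.mem_nthRootsFinset hD, ← pow_mul, mul_comm, pow_mul, hw.pow_eq_one, one_pow]
    · intro a ha b hb hab
      exact hw.pow_inj (mem_range.1 ha) (mem_range.1 hb) hab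
    · intro z hz
      rw [Polynomial.mem_nthRootsFinset hD] at hz
      haveI : NeZero D := ⟨hD.ne'⟩
      obtain ⟨i, hi, h⟩ := hw.eq_pow_of_pow_eq_one hz
      exact ⟨i, mem_range.2 hi, h⟩
    · intro i _
      rw [← pow_mul, ← pow_mul, mul_comm]
  rw [h1, h2]
  split_ifs with h
  · simp [(hw.pow_eq_one_iff_dvd r).2 h]
  · have hne : w ^ r ≠ 1 := fun h' => h ((hw.pow_eq_one_iff_dvd r).1 h')
    rw [geom_sum_eq hne, ← pow_mul, mul_comm, pow_mul, hw.pow_eq_one]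
    simp

/-- `d ↦ c_d(r)` as an arithmetic function. -/
noncomputable def rsAF (r : ℕ) : ArithmeticFunction ℂ :=
  ⟨fun d => ramanujanSum d r, by simp [ramanujanSum]⟩

/-- `D ↦ D * [D ∣ r]` as an arithmetic function. -/
noncomputable def dvAF (r : ℕ) : ArithmeticFunction ℂ :=
  ⟨fun D => if D ∣ r then (D : ℂ) else 0, by simp⟩

open ArithmeticFunction in
lemma rsAF_eq (r : ℕ) :
    rsAF r = dvAF r * ((ArithmeticFunction.moebius : ArithmeticFunction ℤ) : ArithmeticFunction ℂ) := by
  have h : rsAF r * ((ArithmeticFunction.zeta : ArithmeticFunction ℕ) : ArithmeticFunction ℂ)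
      = dvAF r := by
    ext D
    rw [coe_mul_zeta_apply]
    exact rs_sum_divisors D r
  rw [← h, mul_assoc, coe_zeta_mul_coe_moebius, mul_one]

lemma dvAF_mult (r : ℕ) : (dvAF r).IsMultiplicative := by
  refine ⟨by simp [dvAF], ?_⟩
  intro m n hmn
  simp only [dvAF, ArithmeticFunction.coe_mk]
  have : m * n ∣ r ↔ m ∣ r ∧ n ∣ r :=
    ⟨fun h => ⟨(dvd_mul_right m n).trans h, (dvd_mul_left n m).trans h⟩,
      fun h => hmn.mul_dvd_of_dvd_of_dvd h.1 h.2⟩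
  by_cases h1 : m ∣ r <;> by_cases h2 : n ∣ r <;> simp [this, h1, h2]

lemma rs_mul (r : ℕ) {m n : ℕ} (h : m.Coprime n) :
    ramanujanSum (m * n) r = ramanujanSum m r * ramanujanSum n r := by
  have : (rsAF r).IsMultiplicative := by
    rw [rsAF_eq]
    exact (dvAF_mult r).mul ArithmeticFunction.isMultiplicative_moebius.intCast
  exact this.map_mul_of_coprime h

lemma rs_coprime (d r u : ℕ) (h : d.Coprime u) :
    ramanujanSum d (r * u) = ramanujanSum d r := by
  change rsAF (r * u) d = rsAF r d
  rw [rsAF_eq, rsAF_eq, ArithmeticFunction.mul_apply, ArithmeticFunction.mul_apply]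
  refine Finset.sum_congr rfl ?_
  intro x hx
  congr 1
  have hx1 : x.1 ∣ d := by
    rw [Nat.mem_divisorsAntidiagonal] at hx
    exact ⟨x.2, hx.1.symm⟩
  have : x.1 ∣ r * u ↔ x.1 ∣ r := (Nat.Coprime.coprime_dvd_left hx1 h).dvd_mul_right
  simp [dvAF, this]

lemma rs_mul_mul {d e k l : ℕ} (h1 : d.Coprime e) (h2 : d.Coprime l) (h3 : e.Coprime k) :
    ramanujanSum (d * e) (k * l) = ramanujanSum d k * ramanujanSum e l := by
  rw [rs_mul _ h1, rs_coprime d k l h2, mul_comm k l, rs_coprime e l k h3]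

lemma rs_one (r : ℕ) : ramanujanSum 1 r = 1 := by
  have := rs_sum_divisors 1 r
  simpa using this

lemma rs_prime_pow {p : ℕ} (hp : p.Prime) (b r : ℕ) :
    ramanujanSum (p ^ (b + 1)) r =
      (if p ^ (b + 1) ∣ r then (p : ℂ) ^ (b + 1) else 0) -
      (if p ^ b ∣ r then (p : ℂ) ^ b else 0) := by
  have h1 := rs_sum_divisors (p ^ (b + 1)) r
  have h2 := rs_sum_divisors (p ^ b) r
  rw [Nat.sum_divisors_prime_pow hp] at h1 h2
  rw [Finset.sum_range_succ, h2] at h1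
  push_cast at h1
  rw [← h1]
  ring

lemma sum_divisors_coprime {a b : ℕ} (hab : a.Coprime b) (f : ℕ → ℂ) :
    ∑ k ∈ (a * b).divisors, f k = ∑ k ∈ a.divisors, ∑ l ∈ b.divisors, f (k * l) := by
  rw [← Finset.sum_product']
  symm
  refine Finset.sum_bij (fun x _ => x.1 * x.2) ?_ ?_ ?_ ?_
  · intro x hx
    rw [Finset.mem_product, Nat.mem_divisors, Nat.mem_divisors] at hx
    rw [Nat.mem_divisors]
    exact ⟨mul_dvd_mul hx.1.1 hx.2.1, mul_ne_zero hx.1.2 hx.2.2⟩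
  · rintro ⟨x1, x2⟩ hx ⟨y1, y2⟩ hy hxy
    rw [Finset.mem_product, Nat.mem_divisors, Nat.mem_divisors] at hx hy
    obtain ⟨⟨hx1, ha⟩, hx2, hb⟩ := hx
    obtain ⟨⟨hy1, -⟩, hy2, -⟩ := hy
    simp only at hxy hx1 hx2 hy1 hy2
    have c1 : x1.Coprime y2 := Nat.Coprime.of_dvd hx1 hy2 hab
    have c2 : y1.Coprime x2 := Nat.Coprime.of_dvd hy1 hx2 hab
    have e1 : x1 = y1 := Nat.dvd_antisymm
      (c1.dvd_of_dvd_mul_right (hxy ▸ dvd_mul_right x1 x2))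
      (c2.dvd_of_dvd_mul_right (hxy ▸ dvd_mul_right y1 y2))
    subst e1
    have hx0 : 0 < x1 := Nat.pos_of_dvd_of_pos hx1 (Nat.pos_of_ne_zero ha)
    rw [Nat.eq_of_mul_eq_mul_left hx0 hxy]
  · intro k hk
    rw [Nat.mem_divisors] at hk
    obtain ⟨x, y, hx, hy, rfl⟩ := (Nat.dvd_mul).1 hk.1
    refine ⟨(x, y), ?_, rfl⟩
    rw [Finset.mem_product, Nat.mem_divisors, Nat.mem_divisors]
    exact ⟨⟨hx, left_ne_zero_of_mul hk.2⟩, hy, right_ne_zero_of_mul hk.2⟩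
  · intro x _
    rfl

lemma sum_ite_le (x : ℂ) (a b : ℕ) (h : b ≤ a + 1) :
    ∑ j ∈ Finset.range (a + 1), (if b ≤ j then x else 0) = ((a : ℂ) + 1 - b) * x := by
  rw [← Finset.sum_filter, Finset.sum_const]
  have : (Finset.range (a + 1)).filter (fun j => b ≤ j) = Finset.Ico b (a + 1) := by
    ext j; simp [and_comm]
  rw [this, Nat.card_Ico, nsmul_eq_mul, Nat.cast_sub h]
  push_cast; ring

lemma stmt_aux (n : ℕ) : 1 ≤ n → ∀ d : ℕ, d ∣ n →
    ∑ k ∈ n.divisors, ramanujanSum d k =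
      ∏ p ∈ n.primeFactors,
        (((n.factorization p : ℂ) - (d.factorization p : ℂ) + 1) *
            (Nat.totient (p ^ d.factorization p) : ℂ) -
          (if d.factorization p = 0 then 0 else (p : ℂ) ^ (d.factorization p - 1))) := by
  induction n using Nat.recOnPosPrimePosCoprime with
  | zero => intro h; omega
  | one =>
    intro _ d hd
    rw [Nat.dvd_one] at hd
    subst hd
    simp [rs_one]
  | prime_pow p a hp ha =>
    intro _ d hd
    obtain ⟨b, hb, rfl⟩ := (Nat.dvd_prime_pow hp).1 hd
    rw [Nat.primeFactors_prime_pow ha.ne' hp, Finset.prod_singleton,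
      Nat.sum_divisors_prime_pow hp, hp.factorization_pow, hp.factorization_pow]
    simp only [Finsupp.single_eq_same]
    cases b with
    | zero => simp [rs_one]
    | succ b =>
      simp only [rs_prime_pow hp, Nat.pow_dvd_pow_iff_le_right hp.one_lt]
      rw [Finset.sum_sub_distrib, sum_ite_le _ _ _ (by omega), sum_ite_le _ _ _ (by omega),
        Nat.totient_prime_pow_succ hp]
      have := hp.one_le
      push_cast [Nat.cast_sub this]
      simp
      ring
  | coprime a b ha hb hab iha ihb =>
    intro _ d hd
    obtain ⟨d, e, hda, heb, rfl⟩ := (Nat.dvd_mul).1 hd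
    have hde : d.Coprime e := Nat.Coprime.of_dvd hda heb hab
    rw [sum_divisors_coprime hab, hab.primeFactors_mul,
      Finset.prod_union hab.disjoint_primeFactors]
    have hL : ∑ k ∈ a.divisors, ∑ l ∈ b.divisors, ramanujanSum (d * e) (k * l) =
        (∑ k ∈ a.divisors, ramanujanSum d k) * ∑ l ∈ b.divisors, ramanujanSum e l := by
      rw [Finset.sum_mul_sum]
      refine Finset.sum_congr rfl fun k hk => Finset.sum_congr rfl fun l hl => ?_
      have hk := Nat.dvd_of_mem_divisors hk
      have hl := Nat.dvd_of_mem_divisors hl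
      exact rs_mul_mul hde (Nat.Coprime.of_dvd hda hl hab) (Nat.Coprime.of_dvd hk heb hab).symm
    have hd0 : d ≠ 0 := by rintro rfl; simp at hda; omega
    have he0 : e ≠ 0 := by rintro rfl; simp at heb; omega
    rw [hL, iha ha.le d hda, ihb hb.le e heb]
    have hdisj := Finset.disjoint_left.1 hab.disjoint_primeFactors
    congr 1
    · refine Finset.prod_congr rfl fun p hp => ?_
      have hpb : b.factorization p = 0 := by
        rw [← Finsupp.notMem_support_iff]; exact hdisj hp
      have hpe : e.factorization p = 0 :=
        Nat.le_zero.1 (hpb ▸ (Nat.factorization_le_iff_dvd he0 (by omega)).2 heb p)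
      rw [Nat.factorization_mul (by omega) (by omega), Nat.factorization_mul hd0 he0]
      simp [hpb, hpe]
    · refine Finset.prod_congr rfl fun p hp => ?_
      have hpb : a.factorization p = 0 := by
        rw [← Finsupp.notMem_support_iff]; exact fun h => hdisj h hp
      have hpe : d.factorization p = 0 :=
        Nat.le_zero.1 (hpb ▸ (Nat.factorization_le_iff_dvd hd0 (by omega)).2 hda p)
      rw [Nat.factorization_mul (by omega) (by omega), Nat.factorization_mul hd0 he0]
      simp [hpb, hpe]

theorem stmt_10 (n : ℕ) (hn : 2 ≤ n) (d : ℕ) (hd : d ∣ n) :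
    ∑ k ∈ n.divisors, ramanujanSum d k =
      ∏ p ∈ n.primeFactors,
        (((n.factorization p : ℂ) - (d.factorization p : ℂ) + 1) *
            (Nat.totient (p ^ d.factorization p) : ℂ) -
          (if d.factorization p = 0 then 0 else (p : ℂ) ^ (d.factorization p - 1))) := by
  exact stmt_aux n (by omega) d hd
end

section
/- For every positive integer n, the sum of all entries of the Ramanujan matrix equals n: ∑_{d₁|n} ∑_{d₂|n} c_{d₁}(n/d₂) = n. -/
theorem sum_divisors_ramanujanSum (n r : ℕ) (hn : 0 < n) :
    ∑ d ∈ n.divisors, ramanujanSum d r =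
      ∑ j ∈ Finset.range n,
        Complex.exp (2 * Real.pi * Complex.I * ((j : ℂ) * (r : ℂ) / (n : ℂ))) := by
  unfold ramanujanSum
  rw [Finset.sum_sigma']
  refine Finset.sum_bij' (fun p _ => p.2 * (n / p.1))
    (fun j _ => ⟨n / Nat.gcd j n, j / Nat.gcd j n⟩) ?_ ?_ ?_ ?_ ?_
  · rintro ⟨d, m⟩ h
    simp only [Finset.mem_sigma, Nat.mem_divisors, Finset.mem_filter, Finset.mem_range] at h ⊢
    obtain ⟨⟨⟨k, rfl⟩, h0⟩, hm, hg⟩ := h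
    have hd : 0 < d := by omega
    have hk : 0 < k := Nat.pos_of_mul_pos_left hn
    rw [Nat.mul_div_cancel_left _ hd]
    exact Nat.mul_lt_mul_of_pos_right hm hk
  · intro j hj
    have hj := Finset.mem_range.1 hj
    have hg : 0 < Nat.gcd j n := Nat.gcd_pos_of_pos_right _ hn
    simp only [Finset.mem_sigma, Nat.mem_divisors, Finset.mem_filter, Finset.mem_range]
    refine ⟨⟨Nat.div_dvd_of_dvd (Nat.gcd_dvd_right _ _), hn.ne'⟩, ?_, ?_⟩
    · exact Nat.div_lt_div_of_lt_of_dvd (Nat.gcd_dvd_right _ _) hj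
    · exact Nat.coprime_div_gcd_div_gcd hg
  · rintro ⟨d, m⟩ h
    simp only [Finset.mem_sigma, Nat.mem_divisors, Finset.mem_filter, Finset.mem_range] at h ⊢
    obtain ⟨⟨⟨k, rfl⟩, h0⟩, hm, hg⟩ := h
    have hd : 0 < d := by omega
    have hk : 0 < k := Nat.pos_of_mul_pos_left hn
    rw [Nat.mul_div_cancel_left _ hd, Nat.gcd_mul_right, hg, one_mul,
      Nat.mul_div_cancel _ hk, Nat.mul_div_cancel _ hk]
  · intro j hj
    have hg : 0 < Nat.gcd j n := Nat.gcd_pos_of_pos_right _ hn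
    simp only
    rw [Nat.div_div_self (Nat.gcd_dvd_right _ _) hn.ne',
      Nat.div_mul_cancel (Nat.gcd_dvd_left _ _)]
  · rintro ⟨d, m⟩ h
    simp only [Finset.mem_sigma, Nat.mem_divisors, Finset.mem_filter, Finset.mem_range] at h ⊢
    obtain ⟨⟨⟨k, rfl⟩, h0⟩, hm, hg⟩ := h
    have hd : 0 < d := by omega
    have hk : 0 < k := Nat.pos_of_mul_pos_left hn
    rw [Nat.mul_div_cancel_left _ hd]
    have hd' : (d : ℂ) ≠ 0 := by exact_mod_cast hd.ne'
    have hk' : (k : ℂ) ≠ 0 := by exact_mod_cast hk.ne'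
    congr 2
    push_cast
    field_simp

theorem sum_exp_range (n r : ℕ) (hn : 0 < n) :
    ∑ j ∈ Finset.range n,
        Complex.exp (2 * Real.pi * Complex.I * ((j : ℂ) * (r : ℂ) / (n : ℂ))) =
      if n ∣ r then (n : ℂ) else 0 := by
  have hp := Complex.isPrimitiveRoot_exp n hn.ne'
  set z := Complex.exp (2 * Real.pi * Complex.I / n) with hz
  have h1 : ∀ j ∈ Finset.range n,
      Complex.exp (2 * Real.pi * Complex.I * ((j : ℂ) * (r : ℂ) / (n : ℂ))) = (z ^ r) ^ j := by
    intro j _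
    rw [hz, ← Complex.exp_nat_mul, ← Complex.exp_nat_mul]
    congr 1
    ring
  rw [Finset.sum_congr rfl h1]
  split_ifs with h
  · rw [(hp.pow_eq_one_iff_dvd r).2 h]
    simp
  · have hne : z ^ r ≠ 1 := fun h' => h ((hp.pow_eq_one_iff_dvd r).1 h')
    rw [geom_sum_eq hne, ← pow_mul, mul_comm, pow_mul, hp.pow_eq_one]
    simp

theorem stmt_12 (n : ℕ) (hn : 0 < n) :
    ∑ d₁ ∈ n.divisors, ∑ d₂ ∈ n.divisors, ramanujanSum d₁ (n / d₂) = (n : ℂ) := by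
  rw [Finset.sum_comm]
  simp only [sum_divisors_ramanujanSum n _ hn, sum_exp_range n _ hn]
  rw [Finset.sum_eq_single 1]
  · simp
  · intro d hd h1
    rw [if_neg]
    intro h
    have hdn := Nat.dvd_of_mem_divisors hd
    have hd0 := Nat.pos_of_mem_divisors hd
    have h2 : 0 < n / d := Nat.div_pos (Nat.le_of_dvd hn hdn) hd0
    have h3 := Nat.le_of_dvd h2 h
    have h4 : n / d < n := Nat.div_lt_self hn (by omega)
    omega
  · intro h
    exact absurd (Nat.one_mem_divisors.2 hn.ne') h
end

section
/- Let q be a prime, r ≥ 0 an integer, and n = q^{2r+1}. Then for 0 ≤ i ≤ 2r+1, Y[n, q^i] = n if i = r+1, and Y[n, q^i] = 0 otherwise. -/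
/-- `Y[n,k] = ∑_{d ∣ n} c_k(n/d) · c_d(n/d)`. -/
noncomputable def Y (n k : ℕ) : ℂ :=
  ∑ d ∈ n.divisors, ramanujanSum k (n / d) * ramanujanSum d (n / d)


open Finset in
lemma full_sum (q : ℕ) (hq : q.Prime) (j e : ℕ) :
    ∑ m ∈ range (q ^ j), Complex.exp (2 * Real.pi * Complex.I *
      ((m : ℂ) * ((q ^ e : ℕ) : ℂ) / ((q ^ j : ℕ) : ℂ))) =
      if j ≤ e then (q : ℂ) ^ j else 0 := by
  have hq0 : (q : ℂ) ≠ 0 := by exact_mod_cast hq.ne_zero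
  split_ifs with h
  · obtain ⟨t, rfl⟩ := Nat.exists_eq_add_of_le h
    rw [Finset.sum_congr rfl (g := fun _ => (1 : ℂ))]
    · simp
    · intro m _
      rw [Complex.exp_eq_one_iff]
      refine ⟨m * q ^ t, ?_⟩
      push_cast
      rw [pow_add]
      field_simp
  · push Not at h
    obtain ⟨t, rfl⟩ := Nat.exists_eq_add_of_lt h
    have hne : q ^ (t + 1) ≠ 0 := pow_ne_zero _ hq.ne_zero
    have hp := Complex.isPrimitiveRoot_exp (q ^ (t + 1)) hne
    set z := Complex.exp (2 * Real.pi * Complex.I / ((q ^ (t + 1) : ℕ) : ℂ)) with hz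
    have h1 : ∀ m ∈ range (q ^ (e + t + 1)), Complex.exp (2 * Real.pi * Complex.I *
      ((m : ℂ) * ((q ^ e : ℕ) : ℂ) / ((q ^ (e + t + 1) : ℕ) : ℂ))) = z ^ m := by
      intro m _
      rw [hz, ← Complex.exp_nat_mul]
      congr 1
      push_cast
      rw [add_assoc, pow_add _ e]
      field_simp
    rw [Finset.sum_congr rfl h1]
    have hz1 : z ≠ 1 := hp.ne_one (Nat.one_lt_pow (by omega) hq.one_lt)
    rw [geom_sum_eq hz1, add_assoc, pow_add, mul_comm, pow_mul, hp.pow_eq_one]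
    simp

/-- Closed form of the totient on prime powers. -/
noncomputable def phq (q : ℕ) : ℕ → ℂ
  | 0 => 1
  | (j + 1) => (q : ℂ) ^ (j + 1) - (q : ℂ) ^ j

lemma sum_phq (q k : ℕ) : ∑ j ∈ Finset.range (k + 1), phq q j = (q : ℂ) ^ k := by
  induction k with
  | zero => simp [phq]
  | succ k ih => rw [Finset.sum_range_succ, ih]; simp [phq]

open Finset in
lemma ram_succ (q : ℕ) (hq : q.Prime) (j e : ℕ) :
    ramanujanSum (q ^ (j + 1)) (q ^ e) =
      (if j + 1 ≤ e then (q : ℂ) ^ (j + 1) else 0) - (if j ≤ e then (q : ℂ) ^ j else 0) := by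
  have hq0 : (q : ℂ) ≠ 0 := by exact_mod_cast hq.ne_zero
  rw [← full_sum q hq, ← full_sum q hq, ramanujanSum, eq_sub_iff_add_eq,
    ← Finset.sum_filter_add_sum_filter_not (range (q ^ (j + 1))) (fun m => Nat.gcd m (q ^ (j + 1)) = 1)]
  congr 1
  refine Finset.sum_bij (fun m _ => q * m) ?_ ?_ ?_ ?_
  · intro m hm
    simp only [mem_range, mem_filter] at hm ⊢
    refine ⟨by rw [pow_succ']; exact Nat.mul_lt_mul_of_pos_left hm hq.pos, fun h => ?_⟩
    have := Nat.dvd_gcd (Dvd.intro m rfl) (dvd_pow_self q (Nat.succ_ne_zero j))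
    rw [h] at this
    exact hq.one_lt.ne' (Nat.dvd_one.mp this)
  · intro a _ b _ h
    exact Nat.eq_of_mul_eq_mul_left hq.pos h
  · intro m hm
    simp only [mem_range, mem_filter] at hm
    have hd : q ∣ m := by
      by_contra hnd
      exact hm.2 (Nat.Coprime.pow_right _ ((hq.coprime_iff_not_dvd.mpr hnd).symm))
    obtain ⟨k, rfl⟩ := hd
    refine ⟨k, ?_, rfl⟩
    rw [mem_range]
    have := hm.1
    rw [pow_succ'] at this
    exact Nat.lt_of_mul_lt_mul_left this
  · intro m _
    congr 2
    push_cast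
    rw [pow_succ]
    field_simp

lemma ram_le (q : ℕ) (hq : q.Prime) (j e : ℕ) (h : j ≤ e) :
    ramanujanSum (q ^ j) (q ^ e) = phq q j := by
  cases j with
  | zero => simp [ramanujanSum, phq]
  | succ j => rw [ram_succ q hq, if_pos h, if_pos (by omega)]; rfl

lemma ram_eq (q : ℕ) (hq : q.Prime) (e : ℕ) :
    ramanujanSum (q ^ (e + 1)) (q ^ e) = - (q : ℂ) ^ e := by
  rw [ram_succ q hq, if_neg (by omega), if_pos le_rfl]; ring

lemma ram_gt (q : ℕ) (hq : q.Prime) (j e : ℕ) (h : e + 1 < j) :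
    ramanujanSum (q ^ j) (q ^ e) = 0 := by
  cases j with
  | zero => omega
  | succ j => rw [ram_succ q hq, if_neg (by omega), if_neg (by omega)]; ring

open Finset in
lemma Y_eq (q : ℕ) (hq : q.Prime) (r i : ℕ) :
    Y (q ^ (2 * r + 1)) (q ^ i) =
      ∑ j ∈ range (r + 1), ramanujanSum (q ^ i) (q ^ (2 * r + 1 - j)) * phq q j
        - ramanujanSum (q ^ i) (q ^ r) * (q : ℂ) ^ r := by
  rw [Y, Nat.sum_divisors_prime_pow hq]
  have h1 : 2 * r + 1 + 1 = (r + 1) + (r + 1) := by ring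
  rw [h1, Finset.sum_range_add]
  have hdiv : ∀ j ≤ 2 * r + 1, q ^ (2 * r + 1) / q ^ j = q ^ (2 * r + 1 - j) := fun j hj =>
    Nat.pow_div hj hq.pos
  have e1 : ∑ x ∈ range (r + 1), ramanujanSum (q ^ i) (q ^ (2 * r + 1) / q ^ x) *
      ramanujanSum (q ^ x) (q ^ (2 * r + 1) / q ^ x) =
      ∑ j ∈ range (r + 1), ramanujanSum (q ^ i) (q ^ (2 * r + 1 - j)) * phq q j := by
    refine Finset.sum_congr rfl fun j hj => ?_
    rw [mem_range] at hj
    rw [hdiv j (by omega), ram_le q hq j _ (by omega)]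
  have e2 : ∑ x ∈ range r, ramanujanSum (q ^ i) (q ^ (2 * r + 1) / q ^ (r + 1 + (x + 1))) *
      ramanujanSum (q ^ (r + 1 + (x + 1))) (q ^ (2 * r + 1) / q ^ (r + 1 + (x + 1))) = 0 := by
    refine Finset.sum_eq_zero fun j hj => ?_
    rw [mem_range] at hj
    rw [hdiv _ (by omega), ram_gt q hq (r + 1 + (j + 1)) _ (by omega), mul_zero]
  rw [e1, sub_eq_add_neg]
  congr 1
  rw [Finset.sum_range_succ' _ r, e2, hdiv _ (by omega), show 2 * r + 1 - (r + 1 + 0) = r by omega, add_zero (r + 1), ram_eq q hq]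
  ring

theorem stmt_15 (q : ℕ) (hq : q.Prime) (r i : ℕ) (hi : i ≤ 2 * r + 1) :
    Y (q ^ (2 * r + 1)) (q ^ i) =
      if i = r + 1 then ((q ^ (2 * r + 1) : ℕ) : ℂ) else 0 := by
  rw [Y_eq q hq]
  have key : i ≤ r + 1 → ∑ j ∈ Finset.range (r + 1),
      ramanujanSum (q ^ i) (q ^ (2 * r + 1 - j)) * phq q j = phq q i * (q : ℂ) ^ r := by
    intro h
    rw [← sum_phq, Finset.mul_sum]
    refine Finset.sum_congr rfl fun j hj => ?_
    rw [Finset.mem_range] at hj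
    rw [ram_le q hq i _ (by omega)]
  rcases lt_trichotomy i (r + 1) with h | h | h
  · rw [if_neg h.ne, key h.le, ram_le q hq i r (by omega), sub_self]
  · subst h
    rw [if_pos rfl, key le_rfl, ram_eq q hq]
    simp only [phq]
    push_cast
    ring
  · rw [if_neg h.ne', ram_gt q hq i r h]
    obtain ⟨a, ha⟩ := Nat.exists_eq_add_of_le hi
    obtain ⟨b, rfl⟩ : ∃ b, r = a + 1 + b := ⟨r - (a + 1), by omega⟩
    rw [show a + 1 + b + 1 = (a + 1) + 1 + b by ring, Finset.sum_range_add,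
      Finset.sum_range_succ _ (a + 1)]
    have e1 : ∑ j ∈ Finset.range (a + 1), ramanujanSum (q ^ i) (q ^ (2 * (a + 1 + b) + 1 - j)) *
        phq q j = phq q i * (q : ℂ) ^ a := by
      rw [← sum_phq, Finset.mul_sum]
      refine Finset.sum_congr rfl fun j hj => ?_
      rw [Finset.mem_range] at hj
      rw [ram_le q hq i _ (by omega)]
    have e2 : ∑ j ∈ Finset.range b, ramanujanSum (q ^ i)
        (q ^ (2 * (a + 1 + b) + 1 - (a + 1 + 1 + j))) * phq q (a + 1 + 1 + j) = 0 := by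
      refine Finset.sum_eq_zero fun j hj => ?_
      rw [Finset.mem_range] at hj
      rw [ram_gt q hq i _ (by omega), zero_mul]
    obtain ⟨c, rfl⟩ : ∃ c, i = c + 1 := ⟨i - 1, by omega⟩
    rw [e1, e2, show 2 * (a + 1 + b) + 1 - (a + 1) = c by omega, ram_eq q hq]
    simp only [phq]
    ring
end

section
/- For every positive integer n and every divisor k of n, the quantity Y[n,k] = ∑_{d|n} c_k(n/d)·c_d(n/d) is a nonnegative real number. -/
open ArithmeticFunction in
/-- Arithmetic form of the Ramanujan sum. -/
def ramC (k r : ℕ) : ℤ :=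
  ∑ x ∈ k.divisorsAntidiagonal, (if x.1 ∣ r then (x.1 : ℤ) else 0) * moebius x.2

lemma ram_geom (k r : ℕ) (hk : 0 < k) :
    ∑ m ∈ Finset.range k,
      Complex.exp (2 * Real.pi * Complex.I * ((m : ℂ) * (r : ℂ) / (k : ℂ))) =
      if k ∣ r then (k : ℂ) else 0 := by
  have hp := Complex.isPrimitiveRoot_exp k hk.ne'
  set z := Complex.exp (2 * Real.pi * Complex.I / k) with hz
  have h1 : ∀ m : ℕ, Complex.exp (2 * Real.pi * Complex.I * ((m : ℂ) * (r : ℂ) / (k : ℂ)))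
      = (z ^ r) ^ m := by
    intro m
    rw [hz, ← Complex.exp_nat_mul, ← Complex.exp_nat_mul]
    congr 1
    ring
  simp_rw [h1]
  split_ifs with h
  · rw [(hp.pow_eq_one_iff_dvd r).2 h]; simp
  · have h2 : z ^ r ≠ 1 := fun h' => h ((hp.pow_eq_one_iff_dvd r).1 h')
    rw [geom_sum_eq h2, ← pow_mul, mul_comm, pow_mul, hp.pow_eq_one]; simp

open ArithmeticFunction in
lemma sum_moebius_gcd (m d : ℕ) (hd : 0 < d) :
    ∑ e ∈ d.divisors, (if e ∣ m then (moebius e : ℂ) else 0) =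
      if Nat.gcd m d = 1 then 1 else 0 := by
  have h0 : Nat.gcd m d ≠ 0 := (Nat.gcd_pos_of_pos_right m hd).ne'
  have h1 : (∑ e ∈ (Nat.gcd m d).divisors, moebius e) = if Nat.gcd m d = 1 then 1 else 0 := by
    have h := congrArg (fun f => f (Nat.gcd m d)) moebius_mul_coe_zeta
    simp only [mul_comm moebius, coe_zeta_mul_apply, one_apply] at h
    exact h
  have h2 : (Nat.gcd m d).divisors = d.divisors.filter (fun e => e ∣ m) := by
    ext e
    simp only [Nat.mem_divisors, Finset.mem_filter, Nat.dvd_gcd_iff]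
    constructor
    · rintro ⟨⟨a, b⟩, _⟩; exact ⟨⟨b, hd.ne'⟩, a⟩
    · rintro ⟨⟨a, _⟩, b⟩; exact ⟨⟨b, a⟩, h0⟩
  rw [h2] at h1
  rw [← Finset.sum_filter]
  have := congrArg (fun z : ℤ => (z : ℂ)) h1
  push_cast at this
  simpa using this

open ArithmeticFunction in
lemma ram_eq_s17 (k r : ℕ) (hk : 0 < k) : ramanujanSum k r = (ramC k r : ℂ) := by
  unfold ramanujanSum ramC
  rw [Finset.sum_filter]
  have h1 : ∀ m : ℕ, (if Nat.gcd m k = 1 then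
      Complex.exp (2 * Real.pi * Complex.I * ((m : ℂ) * (r : ℂ) / (k : ℂ))) else 0) =
      ∑ e ∈ k.divisors, (if e ∣ m then (moebius e : ℂ) *
        Complex.exp (2 * Real.pi * Complex.I * ((m : ℂ) * (r : ℂ) / (k : ℂ))) else 0) := by
    intro m
    have := sum_moebius_gcd m k hk
    calc _ = (if Nat.gcd m k = 1 then (1:ℂ) else 0) *
      Complex.exp (2 * Real.pi * Complex.I * ((m : ℂ) * (r : ℂ) / (k : ℂ))) := by
          split_ifs <;> simp
      _ = _ := by
        rw [← this, Finset.sum_mul]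
        refine Finset.sum_congr rfl fun e _ => ?_
        split_ifs <;> simp
  simp_rw [h1]
  rw [Finset.sum_comm]
  push_cast
  rw [Nat.sum_divisorsAntidiagonal'
    (f := fun a b => ((if a ∣ r then (a : ℂ) else 0) * (moebius b : ℂ)))]
  refine Finset.sum_congr rfl fun e he => ?_
  obtain ⟨q, rfl⟩ := (Nat.mem_divisors.1 he).1
  have he0 : 0 < e := Nat.pos_of_mul_pos_right hk
  have hq0 : 0 < q := Nat.pos_of_mul_pos_left hk
  rw [Nat.mul_div_cancel_left q he0, ← ram_geom q r hq0, ← Finset.sum_filter,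
    mul_comm _ (moebius e : ℂ),
    Finset.mul_sum]
  symm
  refine Finset.sum_nbij' (fun m => e * m) (fun m => m / e) ?_ ?_ ?_ ?_ ?_
  · intro m hm
    simp only [Finset.mem_range, Finset.mem_filter] at hm ⊢
    exact ⟨Nat.mul_lt_mul_of_pos_left hm he0, dvd_mul_right _ _⟩
  · intro m hm
    simp only [Finset.mem_range, Finset.mem_filter] at hm ⊢
    exact Nat.div_lt_of_lt_mul hm.1
  · intro m hm
    exact Nat.mul_div_cancel_left m he0
  · intro m hm
    simp only [Finset.mem_range, Finset.mem_filter] at hm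
    exact Nat.mul_div_cancel' hm.2
  · intro m hm
    congr 3
    have : (e : ℂ) ≠ 0 := by exact_mod_cast he0.ne'
    push_cast
    rw [mul_assoc, mul_div_mul_left _ _ this]

open ArithmeticFunction in
lemma ramC_mul (a b r : ℕ) (h : Nat.Coprime a b) : ramC (a * b) r = ramC a r * ramC b r := by
  let f : ArithmeticFunction ℤ := ⟨fun e => if e ∣ r then (e : ℤ) else 0, by simp⟩
  have hf : f.IsMultiplicative := by
    refine ⟨by simp [f], ?_⟩
    intro m n hmn
    simp only [f, coe_mk]
    by_cases h1 : m ∣ r <;> by_cases h2 : n ∣ r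
    · simp [h1, h2, hmn.mul_dvd_of_dvd_of_dvd h1 h2]
    · have : ¬ m * n ∣ r := fun h => h2 (dvd_of_mul_left_dvd h)
      simp [h2, this]
    · have : ¬ m * n ∣ r := fun h => h1 (dvd_of_mul_right_dvd h)
      simp [h1, this]
    · have : ¬ m * n ∣ r := fun h => h1 (dvd_of_mul_right_dvd h)
      simp [h1, this]
  exact (hf.mul isMultiplicative_moebius).map_mul_of_coprime h

lemma ramC_right (k r s : ℕ) (h : Nat.Coprime k s) : ramC k (r * s) = ramC k r := by
  unfold ramC
  refine Finset.sum_congr rfl fun x hx => ?_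
  have hx' := (Nat.mem_divisorsAntidiagonal.1 hx).1
  have : Nat.Coprime x.1 s := Nat.Coprime.coprime_dvd_left ⟨x.2, hx'.symm⟩ h
  simp only [this.dvd_mul_right]

/-- Integer form of `Y`. -/
def Yint (n k : ℕ) : ℤ := ∑ d ∈ n.divisors, ramC k (n / d) * ramC d (n / d)

lemma Yint_mul (a b k l : ℕ) (h : Nat.Coprime a b) (hk : k ∣ a) (hl : l ∣ b) :
    Yint (a * b) (k * l) = Yint a k * Yint b l := by
  unfold Yint
  rw [Nat.divisors_mul, Finset.mul_def, Finset.sum_image h.mul_injOn_divisors, Finset.sum_mul_sum,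
    Finset.sum_product]
  refine Finset.sum_congr rfl fun d hd => Finset.sum_congr rfl fun e he => ?_
  have hd' := (Nat.mem_divisors.1 hd).1
  have he' := (Nat.mem_divisors.1 he).1
  have ha : a / d ∣ a := Nat.div_dvd_of_dvd hd'
  have hb : b / e ∣ b := Nat.div_dvd_of_dvd he'
  have c : ∀ x y, x ∣ a → y ∣ b → Nat.Coprime x y := fun x y hx hy =>
    Nat.Coprime.coprime_dvd_left hx (Nat.Coprime.coprime_dvd_right hy h)
  simp only
  rw [Nat.mul_div_mul_comm hd' he', ramC_mul k l _ (c _ _ hk hl), ramC_mul d e _ (c _ _ hd' he'),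
    ramC_right k _ _ (c _ _ hk hb), ramC_right d _ _ (c _ _ hd' hb), mul_comm (a / d),
    ramC_right l _ _ (c _ _ ha hl).symm, ramC_right e _ _ (c _ _ ha he').symm]
  ring

lemma ramC_zero (r : ℕ) : ramC 1 r = 1 := by
  simp [ramC]

lemma ramC_prime (p j i : ℕ) (hp : p.Prime) : ramC (p ^ (j + 1)) (p ^ i) =
    (if j + 1 ≤ i then (p : ℤ) ^ (j + 1) else 0) - (if j ≤ i then (p : ℤ) ^ j else 0) := by
  unfold ramC
  rw [Nat.sum_divisorsAntidiagonal'
    (f := fun a b => ((if a ∣ p ^ i then (a : ℤ) else 0) * (ArithmeticFunction.moebius b))),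
    Nat.sum_divisors_prime_pow hp, Finset.sum_range_succ', Finset.sum_range_succ']
  rw [Finset.sum_eq_zero]
  · have h1 : p ^ (j + 1) / p = p ^ j := by
      rw [pow_succ, Nat.mul_div_cancel _ hp.pos]
    simp [h1, ArithmeticFunction.moebius_apply_prime hp, Nat.pow_dvd_pow_iff_le_right hp.one_lt]
    split_ifs <;> ring
  · intro t _
    rw [ArithmeticFunction.moebius_apply_prime_pow hp (by omega)]
    simp

/-- Partial sums. -/
def Spart (p a J : ℕ) : ℤ :=
  if 2 * J ≤ a then (p : ℤ) ^ J else if a % 2 = 1 then 0 else (p : ℤ) ^ (a / 2)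

lemma Spart_eq (p a J : ℕ) (hp : p.Prime) (hJ : J ≤ a) :
    ∑ j ∈ Finset.range (J + 1), ramC (p ^ j) (p ^ (a - j)) = Spart p a J := by
  induction J with
  | zero => simp [Spart, ramC_zero]
  | succ J ih =>
    rw [Finset.sum_range_succ, ih (by omega), ramC_prime p J _ hp]
    unfold Spart
    by_cases h1 : 2 * (J + 1) ≤ a
    · rw [if_pos (by omega), if_pos (by omega), if_pos (by omega), if_pos (by omega)]; ring
    · rw [if_neg (c := J + 1 ≤ a - (J + 1)) (by omega), if_neg h1]
      by_cases h2 : 2 * J ≤ a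
      · rw [if_pos h2]
        by_cases h3 : a % 2 = 1
        · rw [if_pos (by omega), if_pos h3]; ring
        · rw [if_neg (by omega), if_neg h3]
          have : a / 2 = J := by omega
          rw [this]; ring
      · rw [if_neg h2, if_neg (c := J ≤ a - (J + 1)) (by omega)]; ring

lemma Spart_nonneg (p a J : ℕ) : 0 ≤ Spart p a J := by
  unfold Spart; split_ifs <;> positivity

lemma Spart_step (p a J : ℕ) (hp : p.Prime) : Spart p a (J + 1) ≤ p * Spart p a J := by
  have h1 : (1 : ℤ) ≤ p := by exact_mod_cast hp.one_lt.le
  have key : Spart p a (J + 1) ≤ p * Spart p a J ∨ Spart p a (J + 1) ≤ Spart p a J := by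
    unfold Spart
    by_cases h2 : 2 * J ≤ a
    · rw [if_pos h2]
      split_ifs with h3 h4
      · left; rw [pow_succ, mul_comm]
      · left; positivity
      · right
        have : a / 2 = J := by omega
        rw [this]
    · rw [if_neg h2, if_neg (c := 2 * (J + 1) ≤ a) (by omega)]
      right; exact le_rfl
  rcases key with h | h
  · exact h
  · have := Spart_nonneg p a J
    nlinarith

lemma Yint_prime (p a b : ℕ) (hp : p.Prime) (hb : b ≤ a) : 0 ≤ Yint (p ^ a) (p ^ b) := by
  have h0 : Yint (p ^ a) (p ^ b) = ∑ j ∈ Finset.range (a + 1),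
      ramC (p ^ b) (p ^ (a - j)) * ramC (p ^ j) (p ^ (a - j)) := by
    unfold Yint
    rw [Nat.sum_divisors_prime_pow hp]
    refine Finset.sum_congr rfl fun j hj => ?_
    rw [Nat.pow_div (by simp at hj; omega) hp.pos]
  rw [h0]
  cases b with
  | zero =>
    simp only [pow_zero, ramC_zero, one_mul]
    rw [Spart_eq p a a hp le_rfl]
    exact Spart_nonneg _ _ _
  | succ b =>
    obtain ⟨J, rfl⟩ := Nat.exists_eq_add_of_le hb
    set a := b + 1 + J with ha
    have aux : ∀ K, K ≤ a → ∀ c : ℤ, ∑ j ∈ Finset.range (a + 1),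
        (if j ≤ K then c else 0) * ramC (p ^ j) (p ^ (a - j)) = c * Spart p a K := by
      intro K hK c
      rw [← Spart_eq p a K hp hK, Finset.mul_sum]
      symm
      rw [Finset.sum_subset_zero_on_sdiff (s₂ := Finset.range (a + 1))
        (g := fun j => (if j ≤ K then c else 0) * ramC (p ^ j) (p ^ (a - j)))]
      · intro x hx; simp at hx ⊢; omega
      · intro x hx
        simp at hx
        rw [if_neg (by omega), zero_mul]
      · intro x hx
        simp at hx
        rw [if_pos (by omega)]
    have h1 : ∑ j ∈ Finset.range (a + 1),
      ramC (p ^ (b + 1)) (p ^ (a - j)) * ramC (p ^ j) (p ^ (a - j)) =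
        (p : ℤ) ^ (b + 1) * Spart p a J - (p : ℤ) ^ b * Spart p a (J + 1) := by
      rw [← aux J (by omega), ← aux (J + 1) (by omega), ← Finset.sum_sub_distrib]
      refine Finset.sum_congr rfl fun j hj => ?_
      simp at hj
      rw [ramC_prime p b _ hp, ← sub_mul]
      have e1 : (b + 1 ≤ a - j) ↔ j ≤ J := by omega
      have e2 : (b ≤ a - j) ↔ j ≤ J + 1 := by omega
      simp only [e1, e2]
    rw [h1]
    have h2 := Spart_step p a J hp
    have h3 : (0 : ℤ) ≤ (p : ℤ) ^ b := by positivity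
    have := mul_le_mul_of_nonneg_left h2 h3
    rw [pow_succ, mul_assoc]
    linarith

lemma Yint_nonneg (n : ℕ) : 0 < n → ∀ k, k ∣ n → 0 ≤ Yint n k := by
  induction n using Nat.recOnPosPrimePosCoprime with
  | zero => intro h; omega
  | one =>
    intro _ k hk
    have := Nat.dvd_one.1 hk
    subst this
    simp [Yint, ramC_zero]
  | prime_pow p a hp _ =>
    intro _ k hk
    obtain ⟨b, hb, rfl⟩ := (Nat.dvd_prime_pow hp).1 hk
    exact Yint_prime p a b hp hb
  | coprime a b ha hb hab iha ihb =>
    intro _ k hk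
    obtain ⟨k1, k2, h1, h2, rfl⟩ := (Nat.dvd_mul).1 hk
    rw [Yint_mul a b k1 k2 hab h1 h2]
    exact mul_nonneg (iha (by omega) _ h1) (ihb (by omega) _ h2)

theorem stmt_17 (n : ℕ) (hn : 0 < n) (k : ℕ) (hk : k ∣ n) :
    0 ≤ (Y n k).re ∧ (Y n k).im = 0 := by
  have h : Y n k = ((Yint n k : ℤ) : ℂ) := by
    unfold Y Yint
    push_cast
    refine Finset.sum_congr rfl fun d hd => ?_
    rw [ram_eq_s17 k _ (Nat.pos_of_dvd_of_pos hk hn), ram_eq_s17 d _ (Nat.pos_of_mem_divisors hd)]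
  rw [h]
  refine ⟨?_, by simp⟩
  rw [Complex.intCast_re]
  exact_mod_cast Yint_nonneg n hn k hk
end

section
/- Fix a nonnegative integer u. Let n = n₁·n₂ with n₁, n₂ coprime positive integers, and let k be a divisor of n, written uniquely as k = k₁·k₂ with k₁ | n₁ and k₂ | n₂. Then Y_u[n,k] = Y_u[n₁,k₁]·Y_u[n₂,k₂]. -/
/-- `Y_u[n,k] = ∑_{d ∣ n} c_k(n/d) · (c_d(n/d))^u`. -/
noncomputable def Yu (u n k : ℕ) : ℂ :=
  ∑ d ∈ n.divisors, ramanujanSum k (n / d) * (ramanujanSum d (n / d)) ^ u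

theorem aux_inj {d s : ℕ} (h : Nat.Coprime s d) (hd : d ≠ 0) {z w : ℂ} (hz : z ^ d = 1) (hw : w ^ d = 1)
    (e : z ^ s = w ^ s) : z = w := by
  have hw0 : w ≠ 0 := by
    rintro rfl
    simp [hd] at hw
  have a : (z / w) ^ d = 1 := by rw [div_pow, hz, hw, div_one]
  have b : (z / w) ^ s = 1 := by rw [div_pow, e, div_self (pow_ne_zero _ hw0)]
  have c : orderOf (z / w) ∣ 1 := by
    rw [← h]
    exact Nat.dvd_gcd (orderOf_dvd_of_pow_eq_one b) (orderOf_dvd_of_pow_eq_one a)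
  have c' := orderOf_eq_one_iff.1 (Nat.dvd_one.1 c)
  exact (div_eq_one_iff_eq hw0).1 c'

theorem ram_eq_s18 {d : ℕ} (hd : d ≠ 0) (r : ℕ) :
    ramanujanSum d r = ∑ z ∈ primitiveRoots d ℂ, z ^ r := by
  have hp := Complex.isPrimitiveRoot_exp d hd
  unfold ramanujanSum
  refine Finset.sum_bij (fun m _ => Complex.exp (2 * Real.pi * Complex.I / d) ^ m) ?_ ?_ ?_ ?_
  · intro m hm
    rw [Finset.mem_filter] at hm
    rw [mem_primitiveRoots (Nat.pos_of_ne_zero hd)]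
    exact hp.pow_of_coprime m hm.2
  · intro a ha b hb e
    simp only [Finset.mem_filter, Finset.mem_range] at ha hb
    exact hp.pow_inj ha.1 hb.1 e
  · intro z hz
    rw [mem_primitiveRoots (Nat.pos_of_ne_zero hd)] at hz
    haveI : NeZero d := ⟨hd⟩
    obtain ⟨i, hi, hc, e⟩ := hp.isPrimitiveRoot_iff.1 hz
    exact ⟨i, by simpa using ⟨hi, hc⟩, e⟩
  · intro m hm
    rw [← pow_mul, ← Complex.exp_nat_mul]
    congr 1
    push_cast
    ring

theorem ram_coprime {d : ℕ} (hd : d ≠ 0) (r s : ℕ) (h : Nat.Coprime s d) :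
    ∑ z ∈ primitiveRoots d ℂ, (z ^ s) ^ r = ∑ z ∈ primitiveRoots d ℂ, z ^ r := by
  have hd' := Nat.pos_of_ne_zero hd
  have hm : ∀ z ∈ primitiveRoots d ℂ, z ^ s ∈ primitiveRoots d ℂ := by
    intro z hz
    rw [mem_primitiveRoots hd'] at hz ⊢
    exact hz.pow_of_coprime s h
  have hi : Set.InjOn (fun z : ℂ => z ^ s) (primitiveRoots d ℂ) := by
    intro z hz w hw e
    rw [Finset.mem_coe, mem_primitiveRoots hd'] at hz hw
    exact aux_inj h hd hz.pow_eq_one hw.pow_eq_one e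
  refine Finset.sum_bij (fun z _ => z ^ s) hm (fun a ha b hb e => hi ha hb e) ?_ (fun _ _ => rfl)
  intro z hz
  obtain ⟨w, hw, e⟩ := Finset.surjOn_of_injOn_of_card_le (fun z : ℂ => z ^ s) hm hi le_rfl hz
  exact ⟨w, hw, e⟩

theorem ram_mul {d e : ℕ} (hd : d ≠ 0) (he : e ≠ 0) (h : Nat.Coprime d e) (r s : ℕ)
    (hsd : Nat.Coprime s d) (hre : Nat.Coprime r e) :
    ramanujanSum (d * e) (r * s) = ramanujanSum d r * ramanujanSum e s := by
  have hd' := Nat.pos_of_ne_zero hd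
  have he' := Nat.pos_of_ne_zero he
  have hde' := Nat.mul_pos hd' he'
  rw [ram_eq_s18 hd, ram_eq_s18 he, ram_eq_s18 (mul_ne_zero hd he), ← ram_coprime hd r s hsd,
    ← ram_coprime he s r hre, Finset.sum_mul_sum, ← Finset.sum_product']
  symm
  have hm : ∀ p ∈ primitiveRoots d ℂ ×ˢ primitiveRoots e ℂ,
      p.1 * p.2 ∈ primitiveRoots (d * e) ℂ := by
    intro p hp
    rw [Finset.mem_product, mem_primitiveRoots hd', mem_primitiveRoots he'] at hp
    rw [mem_primitiveRoots hde']
    have h1 := hp.1.eq_orderOf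
    have h2 := hp.2.eq_orderOf
    have := (Commute.all p.1 p.2).orderOf_mul_eq_mul_orderOf_of_coprime (by rwa [← h1, ← h2])
    rw [← h1, ← h2] at this
    rw [← this]
    exact IsPrimitiveRoot.orderOf _
  have hi : Set.InjOn (fun p : ℂ × ℂ => p.1 * p.2)
      ((primitiveRoots d ℂ ×ˢ primitiveRoots e ℂ : Finset (ℂ × ℂ)) : Set (ℂ × ℂ)) := by
    intro p hp q hq E
    rw [Finset.mem_coe, Finset.mem_product, mem_primitiveRoots hd', mem_primitiveRoots he'] at hp hq
    have E : p.1 * p.2 = q.1 * q.2 := E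
    have E1 := congrArg (· ^ e) E
    have E2 := congrArg (· ^ d) E
    simp only [mul_pow, hp.1.pow_eq_one, hp.2.pow_eq_one, hq.1.pow_eq_one, hq.2.pow_eq_one,
      one_mul, mul_one] at E1 E2
    exact Prod.ext (aux_inj h.symm hd hp.1.pow_eq_one hq.1.pow_eq_one E1)
      (aux_inj h he hp.2.pow_eq_one hq.2.pow_eq_one E2)
  refine Finset.sum_bij (fun p _ => p.1 * p.2) hm (fun a ha b hb e => hi ha hb e) ?_ ?_
  · intro z hz
    obtain ⟨w, hw, e⟩ := Finset.surjOn_of_injOn_of_card_le (fun p : ℂ × ℂ => p.1 * p.2) hm hi (by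
      rw [Finset.card_product, Complex.card_primitiveRoots, Complex.card_primitiveRoots,
        Complex.card_primitiveRoots, Nat.totient_mul h]) hz
    exact ⟨w, hw, e⟩
  · intro p _
    ring

theorem stmt_18 (u : ℕ) (n₁ n₂ : ℕ) (h₁ : 0 < n₁) (h₂ : 0 < n₂)
    (hcop : Nat.Coprime n₁ n₂) (k₁ k₂ : ℕ) (hk₁ : k₁ ∣ n₁) (hk₂ : k₂ ∣ n₂) :
    Yu u (n₁ * n₂) (k₁ * k₂) = Yu u n₁ k₁ * Yu u n₂ k₂ := by
  unfold Yu
  rw [Finset.sum_mul_sum, ← Finset.sum_product', Nat.divisors_mul, Finset.mul_def,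
    Finset.sum_image]
  · refine Finset.sum_congr rfl ?_
    rintro ⟨a, b⟩ hp
    simp only [Finset.mem_product, Nat.mem_divisors] at hp ⊢
    obtain ⟨⟨ha, -⟩, hb, -⟩ := hp
    have key : ∀ x y : ℕ, x ∣ n₁ → y ∣ n₂ → Nat.Coprime x y := fun x y hx hy =>
      Nat.Coprime.of_dvd hx hy hcop
    have ha' := Nat.div_dvd_of_dvd ha
    have hb' := Nat.div_dvd_of_dvd hb
    have nz : ∀ x, x ∣ n₁ → x ≠ 0 := fun x hx => (Nat.pos_of_dvd_of_pos hx h₁).ne'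
    have nz' : ∀ x, x ∣ n₂ → x ≠ 0 := fun x hx => (Nat.pos_of_dvd_of_pos hx h₂).ne'
    rw [Nat.mul_div_mul_comm ha hb,
      ram_mul (nz _ hk₁) (nz' _ hk₂) (key _ _ hk₁ hk₂) _ _ (key _ _ hk₁ hb').symm (key _ _ ha' hk₂),
      ram_mul (nz _ ha) (nz' _ hb) (key _ _ ha hb) _ _ (key _ _ ha hb').symm (key _ _ ha' hb)]
    ring
  · rintro ⟨a, b⟩ hp ⟨c, d⟩ hq E
    simp only [Finset.coe_product, Set.mem_prod, Finset.mem_coe, Nat.mem_divisors] at hp hq E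
    have key : ∀ x y : ℕ, x ∣ n₁ → y ∣ n₂ → Nat.Coprime x y := fun x y hx hy =>
      Nat.Coprime.of_dvd hx hy hcop
    obtain ⟨⟨ha, -⟩, hb, -⟩ := hp
    obtain ⟨⟨hc, -⟩, hd, -⟩ := hq
    have e1 : a = c := Nat.dvd_antisymm
      ((key a d ha hd).dvd_of_dvd_mul_right (E ▸ Dvd.intro _ rfl))
      ((key c b hc hb).dvd_of_dvd_mul_right (E ▸ Dvd.intro _ rfl))
    have e2 : b = d := Nat.dvd_antisymm
      ((key c b hc hb).symm.dvd_of_dvd_mul_left (E ▸ Dvd.intro_left _ rfl))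
      ((key a d ha hd).symm.dvd_of_dvd_mul_left (E ▸ Dvd.intro_left _ rfl))
    rw [e1, e2]
end
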